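/- arXiv:2103.03064 — 5 statements merged into one kernel-verified Lean document; each statement's English description precedes it below -/
import Mathlib

section
/- Let n ≥ 2 be an integer, H ∈ ℝ, a ≥ 0, and R > 0 (with R ≤ π/(2√H) if H > 0). Let m : (0,R] → ℝ be C¹, f : [0,R] → ℝ be C², and ρ : [0,R] → [0,∞) be continuous. Assume: (i) m'(t) ≤ −m(t)²/(n−1) − (n−1)H + f''(t) + ρ(t) for all t ∈ (0,R); (ii) s_H(t)²·(m(t) − (n−1)·s_H'(t)/s_H(t)) → 0 as t → 0⁺; (iii) f'(t) ≥ −a for all t ∈ (0,R]. Then for every r ∈ (0,R], m(r) − f'(r) ≤ (n−1)·s_H'(r)/s_H(r) + a + ∫₀ʳ ρ(t) dt. (Analytic form of the weighted mean curvature comparison, Theorem 1.1(b).) -/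
/-!
Write `s = sH H`, `c = s'`, `k = n - 1` and `P t = ∫₀ᵗ ρ`. The Riccati inequality, after completing
the square `(s m - k c)² / k ≥ 0`, gives `(s² m - k s c)' ≤ s² (f'' + ρ)`. Hence
`G = s² (m - f' - a - P) - k s c` satisfies `G' ≤ -2 s c (f' + a + P) ≤ 0` on `(0, R)`, because
`s` and `c` are nonnegative there and `f' ≥ -a`. The asymptotic condition and the boundedness of
`f'` and `P` near `0` give `G → 0` at `0⁺`, so `G ≤ 0` on `(0, R]`; dividing by `s²` is the claim.
-/

open Real MeasureTheory Set Filter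

/-- The solution of `s'' + H s = 0`, `s 0 = 0`, `s' 0 = 1`. -/
noncomputable def sH (H t : ℝ) : ℝ :=
  if 0 < H then Real.sin (Real.sqrt H * t) / Real.sqrt H
  else if H = 0 then t
  else Real.sinh (Real.sqrt (-H) * t) / Real.sqrt (-H)

/-- The derivative of `sH H`. -/
noncomputable def sH' (H t : ℝ) : ℝ :=
  if 0 < H then Real.cos (Real.sqrt H * t)
  else if H = 0 then 1
  else Real.cosh (Real.sqrt (-H) * t)

theorem sH_hasDerivAt (H t : ℝ) : HasDerivAt (sH H) (sH' H t) t := by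
  unfold sH sH'
  split_ifs with h1 h2
  · have hs : Real.sqrt H ≠ 0 := (Real.sqrt_pos.2 h1).ne'
    have := (((hasDerivAt_id' t).const_mul (Real.sqrt H)).sin).div_const (Real.sqrt H)
    refine HasDerivAt.congr_deriv this ?_
    field_simp
  · exact hasDerivAt_id t
  · have hs : Real.sqrt (-H) ≠ 0 := by
      apply (Real.sqrt_pos.2 _).ne'
      rcases lt_trichotomy H 0 with h | h | h
      · linarith
      · exact absurd h h2
      · exact absurd h h1
    have := (((hasDerivAt_id' t).const_mul (Real.sqrt (-H))).sinh).div_const (Real.sqrt (-H))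
    refine HasDerivAt.congr_deriv this ?_
    field_simp

theorem sH'_hasDerivAt (H t : ℝ) : HasDerivAt (sH' H) (-H * sH H t) t := by
  unfold sH sH'
  split_ifs with h1 h2
  · have hs : Real.sqrt H ≠ 0 := (Real.sqrt_pos.2 h1).ne'
    have hq : Real.sqrt H ^ 2 = H := Real.sq_sqrt h1.le
    have := ((hasDerivAt_id' t).const_mul (Real.sqrt H)).cos
    refine HasDerivAt.congr_deriv this ?_
    field_simp
    rw [hq]
    ring
  · subst h2
    simpa using hasDerivAt_const t (1 : ℝ)
  · have hH : 0 < -H := by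
      rcases lt_trichotomy H 0 with h | h | h
      · linarith
      · exact absurd h h2
      · exact absurd h h1
    have hs : Real.sqrt (-H) ≠ 0 := (Real.sqrt_pos.2 hH).ne'
    have hq : Real.sqrt (-H) ^ 2 = -H := Real.sq_sqrt hH.le
    have := ((hasDerivAt_id' t).const_mul (Real.sqrt (-H))).cosh
    refine HasDerivAt.congr_deriv this ?_
    field_simp
    rw [hq]
    ring

theorem sH_zero (H : ℝ) : sH H 0 = 0 := by
  unfold sH
  split_ifs <;> simp

theorem sqrt_mul_le_pi_div_two {H R t : ℝ} (hH : 0 < H) (hR : R ≤ Real.pi / (2 * Real.sqrt H))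
    (ht : t ≤ R) : Real.sqrt H * t ≤ Real.pi / 2 := by
  have hs : 0 < Real.sqrt H := Real.sqrt_pos.2 hH
  calc Real.sqrt H * t ≤ Real.sqrt H * (Real.pi / (2 * Real.sqrt H)) := by
        gcongr
        exact ht.trans hR
    _ = Real.pi / 2 := by field_simp

theorem sH_pos {H R t : ℝ} (hHR : 0 < H → R ≤ Real.pi / (2 * Real.sqrt H))
    (ht : t ∈ Set.Ioc 0 R) : 0 < sH H t := by
  unfold sH
  split_ifs with h1 h2
  · have hs : 0 < Real.sqrt H := Real.sqrt_pos.2 h1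
    have := sqrt_mul_le_pi_div_two h1 (hHR h1) ht.2
    refine div_pos (Real.sin_pos_of_pos_of_lt_pi (mul_pos hs ht.1) ?_) hs
    linarith [Real.pi_pos]
  · exact ht.1
  · have hH : 0 < -H := by
      rcases lt_trichotomy H 0 with h | h | h
      · linarith
      · exact absurd h h2
      · exact absurd h h1
    have hs : 0 < Real.sqrt (-H) := Real.sqrt_pos.2 hH
    exact div_pos (Real.sinh_pos_iff.2 (mul_pos hs ht.1)) hs

theorem sH'_nonneg {H R t : ℝ} (hHR : 0 < H → R ≤ Real.pi / (2 * Real.sqrt H))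
    (ht : t ∈ Set.Ioc 0 R) : 0 ≤ sH' H t := by
  unfold sH'
  split_ifs with h1 h2
  · have hs : 0 < Real.sqrt H := Real.sqrt_pos.2 h1
    have := sqrt_mul_le_pi_div_two h1 (hHR h1) ht.2
    refine Real.cos_nonneg_of_neg_pi_div_two_le_of_le ?_ this
    linarith [Real.pi_pos, mul_pos hs ht.1]
  · exact zero_le_one
  · exact (Real.cosh_pos _).le

/-- Analytic form of the weighted mean curvature comparison, Theorem 1.1(b). -/
theorem stmt_0 (n : ℕ) (hn : 2 ≤ n) (H a R : ℝ) (ha : 0 ≤ a) (hR : 0 < R)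
    (hHR : 0 < H → R ≤ Real.pi / (2 * Real.sqrt H))
    (m f ρ m' f' f'' : ℝ → ℝ)
    (hmC : ContinuousOn m (Set.Ioc 0 R))
    (hm : ∀ t ∈ Set.Ioo 0 R, HasDerivAt m (m' t) t)
    (hf : ∀ t ∈ Set.Icc 0 R, HasDerivWithinAt f (f' t) (Set.Icc 0 R) t)
    (hf' : ∀ t ∈ Set.Icc 0 R, HasDerivWithinAt f' (f'' t) (Set.Icc 0 R) t)
    (hf''C : ContinuousOn f'' (Set.Icc 0 R))
    (hρC : ContinuousOn ρ (Set.Icc 0 R)) (hρ : ∀ t ∈ Set.Icc 0 R, 0 ≤ ρ t)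
    (hRic : ∀ t ∈ Set.Ioo 0 R,
      m' t ≤ -(m t) ^ 2 / (n - 1) - (n - 1) * H + f'' t + ρ t)
    (hasymp : Filter.Tendsto
      (fun t => (sH H t) ^ 2 * (m t - (n - 1) * sH' H t / sH H t))
      (nhdsWithin 0 (Set.Ioi 0)) (nhds 0))
    (hfa : ∀ t ∈ Set.Ioc 0 R, -a ≤ f' t) :
    ∀ r ∈ Set.Ioc 0 R,
      m r - f' r ≤ (n - 1) * sH' H r / sH H r + a + ∫ t in (0:ℝ)..r, ρ t := by
  intro r hr
  have hk : (0 : ℝ) < (n : ℝ) - 1 := by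
    have : (2 : ℝ) ≤ n := by exact_mod_cast hn
    linarith
  set k : ℝ := (n : ℝ) - 1 with hkdef
  set P : ℝ → ℝ := fun t => ∫ x in (0 : ℝ)..t, ρ x with hPdef
  have hPC : ContinuousOn P (Set.Icc 0 R) := by
    have h := intervalIntegral.continuousOn_primitive_interval (μ := volume) (a := 0) (b := R)
      (f := ρ) (by rw [Set.uIcc_of_le hR.le]; exact hρC.integrableOn_Icc)
    rwa [Set.uIcc_of_le hR.le] at h
  have hPD : ∀ t ∈ Set.Ioo 0 R, HasDerivAt P (ρ t) t := by
    intro t ht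
    have hnhds : Set.Icc 0 R ∈ nhds t := Icc_mem_nhds ht.1 ht.2
    refine intervalIntegral.integral_hasDerivAt_right ?_ ?_ (hρC.continuousAt hnhds)
    · apply ContinuousOn.intervalIntegrable
      rw [Set.uIcc_of_le ht.1.le]
      exact hρC.mono (Set.Icc_subset_Icc_right ht.2.le)
    · exact (hρC.mono Set.Ioo_subset_Icc_self).stronglyMeasurableAtFilter isOpen_Ioo t ht
  have hPnn : ∀ t ∈ Set.Icc 0 R, 0 ≤ P t := fun t ht =>
    intervalIntegral.integral_nonneg ht.1 fun u hu => hρ u ⟨hu.1, hu.2.trans ht.2⟩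
  have hsC : Continuous (sH H) :=
    continuous_iff_continuousAt.2 fun t => (sH_hasDerivAt H t).continuousAt
  have hcC : Continuous (sH' H) :=
    continuous_iff_continuousAt.2 fun t => (sH'_hasDerivAt H t).continuousAt
  have hf'C : ContinuousOn f' (Set.Icc 0 R) := fun t ht => (hf' t ht).continuousWithinAt
  set G : ℝ → ℝ := fun t => (sH H t) ^ 2 * (m t - f' t - a - P t) - k * (sH H t * sH' H t)
    with hG
  have hGC : ContinuousOn G (Set.Ioc 0 R) := by
    have h1 := hf'C.mono (Set.Ioc_subset_Icc_self)
    have h2 := hPC.mono (Set.Ioc_subset_Icc_self)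
    exact ((hsC.pow 2).continuousOn.mul (((hmC.sub h1).sub continuousOn_const).sub h2)).sub
      ((continuous_const.mul (hsC.mul hcC)).continuousOn)
  have hGD : ∀ t ∈ Set.Ioo 0 R, HasDerivAt G
      (2 * sH H t * sH' H t * (m t - f' t - a - P t) + sH H t ^ 2 * (m' t - f'' t - ρ t)
        - k * (sH' H t * sH' H t + sH H t * (-H * sH H t))) t := by
    intro t ht
    have h1 := (hf' t (Set.Ioo_subset_Icc_self ht)).hasDerivAt (Icc_mem_nhds ht.1 ht.2)
    have hs := sH_hasDerivAt H t
    have hc := sH'_hasDerivAt H t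
    have := ((hs.pow 2).mul ((((hm t ht).sub h1).sub_const a).sub (hPD t ht))).sub
      ((hs.mul hc).const_mul k)
    refine HasDerivAt.congr_deriv this ?_
    simp
  have hanti : AntitoneOn G (Set.Ioc 0 R) := by
    refine antitoneOn_of_deriv_nonpos (convex_Ioc 0 R) hGC ?_ ?_
    · rw [interior_Ioc]
      exact fun t ht => (hGD t ht).differentiableAt.differentiableWithinAt
    · rw [interior_Ioc]
      intro t ht
      rw [(hGD t ht).deriv]
      have ht' : t ∈ Set.Ioc 0 R := Set.Ioo_subset_Ioc_self ht
      have hs := sH_pos hHR ht'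
      have hc := sH'_nonneg hHR ht'
      have hfp : 0 ≤ f' t + a + P t := by
        linarith [hfa t ht', hPnn t (Set.Ioo_subset_Icc_self ht)]
      have h1 : sH H t ^ 2 * (m' t - f'' t - ρ t) ≤
          sH H t ^ 2 * (-(m t) ^ 2 / k - k * H) :=
        mul_le_mul_of_nonneg_left (by linarith [hRic t ht]) (sq_nonneg _)
      -- Completing the square turns the Riccati term into `-(s m - k c)² / k`.
      have h2 : 0 ≤ (sH H t * m t - k * sH' H t) ^ 2 / k := by positivity
      have h3 : (sH H t * m t - k * sH' H t) ^ 2 / k =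
          -(sH H t ^ 2 * (-(m t) ^ 2 / k)) - 2 * sH H t * sH' H t * m t
            + k * (sH' H t * sH' H t) := by
        field_simp
        ring
      have h4 : 0 ≤ 2 * sH H t * sH' H t * (f' t + a + P t) := by positivity
      nlinarith [h1, h2, h3, h4]
  have hlim : Tendsto G (nhdsWithin 0 (Set.Ioi 0)) (nhds 0) := by
    have h0 : (0 : ℝ) ∈ Set.Icc 0 R := ⟨le_rfl, hR.le⟩
    have hle : nhdsWithin (0 : ℝ) (Set.Ioi 0) ≤ nhdsWithin 0 (Set.Icc 0 R) := by
      rw [← nhdsWithin_Ioc_eq_nhdsGT hR]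
      exact nhdsWithin_mono _ Set.Ioc_subset_Icc_self
    have h1 : Tendsto (fun t => f' t + a + P t) (nhdsWithin 0 (Set.Ioi 0))
        (nhds (f' 0 + a + P 0)) :=
      (((hf'C 0 h0).add continuousWithinAt_const).add (hPC 0 h0)).mono_left hle
    have h2 : Tendsto (fun t => sH H t ^ 2) (nhdsWithin 0 (Set.Ioi 0)) (nhds 0) := by
      have : Tendsto (fun t => sH H t ^ 2) _ (nhds (sH H 0 ^ 2)) :=
        ((hsC.pow 2).tendsto 0).mono_left (nhdsWithin_le_nhds (s := Set.Ioi 0))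
      simpa [sH_zero] using this
    have h3 := hasymp.sub (h2.mul h1)
    rw [zero_mul, sub_zero] at h3
    refine h3.congr' ?_
    filter_upwards [Ioc_mem_nhdsGT hR] with t ht
    have hs := sH_pos hHR ht
    simp only [hG]
    field_simp
    ring
  have hGr : G r ≤ 0 := by
    refine ge_of_tendsto hlim ?_
    filter_upwards [Ioc_mem_nhdsGT hr.1] with t ht
    exact hanti ⟨ht.1, ht.2.trans hr.2⟩ hr ht.2
  have hs := sH_pos hHR hr
  have hGr' : G r = sH H r ^ 2 * (m r - f' r - (k * sH' H r / sH H r + a + P r)) := by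
    simp only [hG]
    field_simp
    ring
  rw [hGr'] at hGr
  have := nonpos_of_mul_nonpos_right hGr (pow_pos hs 2)
  linarith
end

section
/- Let n ≥ 2 be an integer, H > 0, and k ≥ 0. Set R = π/(2√H). Let m : (0,R] → ℝ be C¹, f : [0,R] → ℝ be C² with |f(t)| ≤ k on [0,R], and ρ : [0,R] → [0,∞) be continuous. Assume: (i) m'(t) ≤ −m(t)²/(n−1) − (n−1)H + f''(t) + ρ(t) for all t ∈ (0,R); (ii) s_H(t)²·(m(t) − (n−1)·s_H'(t)/s_H(t)) → 0 as t → 0⁺. Then for every r with π/(4√H) ≤ r ≤ π/(2√H), m(r) − f'(r) ≤ (n−1)·√H·cot(√H·r) + 2k√H/sin²(√H·r) + ∫₀ʳ ρ(t) dt. (Analytic form of the second part of Theorem 1.1(a); the right-hand side equals (1 + (4k/(n−1))·(1/sin(2√H r)))·m_H(r) + ∫₀ʳ ρ, where m_H(r) = (n−1)√H·cot(√H r).) -/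
/-!
Write `a = √H`. Completing the square in the Riccati inequality gives
`(s_H² (m - (n-1) s_H'/s_H))' ≤ s_H² (f'' + ρ)`. Integrating this from `0`, moving both derivatives
off `f''` by parts, and using `∫ s_H² ρ ≤ s_H(r)² ∫ ρ` together with `|f| ≤ k` and
`∫₀ʳ 2 |cos (2 a t)| dt = (2 - sin (2 a r)) / a` for `π/(4a) ≤ r ≤ π/(2a)` yields the bound.

The argument is carried out without integrating by parts: with `P t = ∫₀ᵗ ρ`, the function
`W = sin² (m - f' - P) - (n-1) a sin cos + 2 a sin cos · f` (trigonometric functions at `a t`)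
satisfies `W' ≤ 2 a² cos (2 a t) f` and `W → 0` at `0⁺` (lemmas `comparison_deriv` and
`comparison_tendsto`). Hence `W - k a sin (2 a t)` is nonincreasing on `(0, π/(4a)]` and
`W + k a sin (2 a t)` is nonincreasing on `[π/(4a), π/(2a)]`, which gives
`W r + k a sin (2 a r) ≤ 2 k a`.
-/

open Real MeasureTheory Set Filter

/-- The function `W` above, with `N` standing for `n - 1` and `g` for `f'`; it is `H` times
`s_H² (m - g - P) - N s_H s_H' + (s_H²)' f`. -/
noncomputable def comparisonFun (N a : ℝ) (m f g P : ℝ → ℝ) (t : ℝ) : ℝ :=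
  sin (a * t) ^ 2 * (m t - g t - P t) - N * a * (sin (a * t) * cos (a * t))
    + 2 * a * (sin (a * t) * cos (a * t)) * f t

lemma hasDerivAt_sin_mul_cos (a t : ℝ) :
    HasDerivAt (fun t => sin (a * t) * cos (a * t))
      (a * (cos (a * t) ^ 2 - sin (a * t) ^ 2)) t := by
  have h : HasDerivAt (fun t : ℝ => a * t) a t := by
    simpa using (hasDerivAt_id t).const_mul a
  exact (h.sin.mul h.cos).congr_deriv (by ring)

/-- The Riccati inequality, after completing the square, makes all terms in `m` disappear. -/
lemma comparison_deriv {N a t : ℝ} {m f g P : ℝ → ℝ} {m₁ g₁ p₁ : ℝ} (hN : 0 < N) (ha : 0 < a)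
    (hm : HasDerivAt m m₁ t) (hf : HasDerivAt f (g t) t) (hg : HasDerivAt g g₁ t)
    (hP : HasDerivAt P p₁ t) (hP0 : 0 ≤ P t)
    (hs : 0 ≤ sin (a * t)) (hc : 0 ≤ cos (a * t))
    (hRic : m₁ ≤ -(m t) ^ 2 / N - N * a ^ 2 + g₁ + p₁) :
    ∃ D, HasDerivAt (comparisonFun N a m f g P) D t ∧
      D ≤ 2 * a ^ 2 * (cos (a * t) ^ 2 - sin (a * t) ^ 2) * f t := by
  have h : HasDerivAt (fun t : ℝ => a * t) a t := by
    simpa using (hasDerivAt_id t).const_mul a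
  have hsc := hasDerivAt_sin_mul_cos a t
  refine ⟨_, (((h.sin.pow 2).mul ((hm.sub hg).sub hP)).sub (hsc.const_mul (N * a))).add
    ((hsc.const_mul (2 * a)).mul hf), ?_⟩
  simp only [Pi.sub_apply, Pi.pow_apply]
  generalize sin (a * t) = s at *
  generalize cos (a * t) = c at *
  have h1 : s ^ 2 * m₁ ≤ s ^ 2 * (-(m t) ^ 2 / N - N * a ^ 2 + g₁ + p₁) :=
    mul_le_mul_of_nonneg_left hRic (sq_nonneg s)
  have h2 : 0 ≤ (s * m t - N * a * c) ^ 2 / N := by positivity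
  have h3 : (s * m t - N * a * c) ^ 2 / N
      = s ^ 2 * m t ^ 2 / N - 2 * a * s * c * m t + N * a ^ 2 * c ^ 2 := by
    field_simp
    ring
  have h4 : s ^ 2 * (-(m t) ^ 2 / N - N * a ^ 2 + g₁ + p₁)
      = -(s ^ 2 * m t ^ 2 / N) - N * a ^ 2 * s ^ 2 + s ^ 2 * (g₁ + p₁) := by ring
  have h5 : 0 ≤ a * s * c * P t := by positivity
  push_cast
  nlinarith [h1, h2, h3, h4, h5]

lemma comparison_tendsto {N H : ℝ} {m f g P : ℝ → ℝ} {f₀ g₀ : ℝ} (hH : 0 < H)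
    (hf : Tendsto f (nhdsWithin 0 (Ioi 0)) (nhds f₀))
    (hg : Tendsto g (nhdsWithin 0 (Ioi 0)) (nhds g₀))
    (hP : Tendsto P (nhdsWithin 0 (Ioi 0)) (nhds 0))
    (hm : Tendsto (fun t => (sH H t) ^ 2 * (m t - N * sH' H t / sH H t))
      (nhdsWithin 0 (Ioi 0)) (nhds 0)) :
    Tendsto (comparisonFun N (√H) m f g P) (nhdsWithin 0 (Ioi 0)) (nhds 0) := by
  have ha : 0 < √H := sqrt_pos.2 hH
  have hs : Tendsto (fun t => sin (√H * t)) (nhdsWithin 0 (Ioi 0)) (nhds 0) := by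
    have : Continuous fun t => sin (√H * t) := by fun_prop
    simpa using (this.tendsto 0).mono_left nhdsWithin_le_nhds
  have hc : Tendsto (fun t => cos (√H * t)) (nhdsWithin 0 (Ioi 0)) (nhds 1) := by
    have : Continuous fun t => cos (√H * t) := by fun_prop
    simpa using (this.tendsto 0).mono_left nhdsWithin_le_nhds
  have key := ((hm.const_mul (√H ^ 2)).sub ((hs.pow 2).mul (hg.add hP))).add
    (((hs.mul hc).const_mul (2 * √H)).mul hf)
  norm_num at key
  refine key.congr fun t => ?_
  simp only [comparisonFun, sH, sH', hH, if_true]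
  rcases eq_or_ne (sin (√H * t)) 0 with h0 | h0
  · simp [h0]
  · have := sq_sqrt hH.le
    rw [← this, sqrt_sq ha.le]
    field_simp
    ring

/-- Analytic form of the second part of Theorem 1.1(a): mean curvature
comparison for `π/(4√H) ≤ r ≤ π/(2√H)`. -/
theorem stmt_2 (n : ℕ) (hn : 2 ≤ n) (H k R : ℝ) (hH : 0 < H) (hk : 0 ≤ k)
    (hR : R = Real.pi / (2 * Real.sqrt H))
    (m f ρ m' f' f'' : ℝ → ℝ)
    (hmC : ContinuousOn m (Set.Ioc 0 R))
    (hm : ∀ t ∈ Set.Ioo 0 R, HasDerivAt m (m' t) t)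
    (hf : ∀ t ∈ Set.Icc 0 R, HasDerivWithinAt f (f' t) (Set.Icc 0 R) t)
    (hf' : ∀ t ∈ Set.Icc 0 R, HasDerivWithinAt f' (f'' t) (Set.Icc 0 R) t)
    (hf''C : ContinuousOn f'' (Set.Icc 0 R))
    (hfk : ∀ t ∈ Set.Icc 0 R, |f t| ≤ k)
    (hρC : ContinuousOn ρ (Set.Icc 0 R)) (hρ : ∀ t ∈ Set.Icc 0 R, 0 ≤ ρ t)
    (hRic : ∀ t ∈ Set.Ioo 0 R,
      m' t ≤ -(m t) ^ 2 / (n - 1) - (n - 1) * H + f'' t + ρ t)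
    (hasymp : Filter.Tendsto
      (fun t => (sH H t) ^ 2 * (m t - (n - 1) * sH' H t / sH H t))
      (nhdsWithin 0 (Set.Ioi 0)) (nhds 0)) :
    ∀ r, Real.pi / (4 * Real.sqrt H) ≤ r → r ≤ Real.pi / (2 * Real.sqrt H) →
      m r - f' r ≤ (n - 1) * Real.sqrt H *
          (Real.cos (Real.sqrt H * r) / Real.sin (Real.sqrt H * r))
        + 2 * k * Real.sqrt H / (Real.sin (Real.sqrt H * r)) ^ 2
        + ∫ t in (0:ℝ)..r, ρ t := by
  intro r hr1 hr2
  have ha : 0 < √H := sqrt_pos.2 hH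
  have hN : (0 : ℝ) < (n : ℝ) - 1 := by
    have : (2 : ℝ) ≤ n := by exact_mod_cast hn
    linarith
  have hHa : √H ^ 2 = H := sq_sqrt hH.le
  have hRpos : 0 < R := by rw [hR]; positivity
  obtain ⟨q, hq⟩ : ∃ q, q = π / (4 * √H) := ⟨_, rfl⟩
  have hq0 : 0 < q := by rw [hq]; positivity
  have haq : √H * q = π / 4 := by rw [hq]; field_simp
  have haR : √H * R = π / 2 := by rw [hR]; field_simp
  rw [← hq] at hr1
  rw [← hR] at hr2
  have hqR : q ≤ R := hr1.trans hr2
  -- `ρ` is replaced by a globally continuous function agreeing with it on `[0, R]`.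
  obtain ⟨ρ₁, hρ₁C, hρ₁⟩ : ∃ ρ₁ : ℝ → ℝ, Continuous ρ₁ ∧ ∀ t ∈ Icc 0 R, ρ₁ t = ρ t :=
    ⟨IccExtend hRpos.le ((Icc 0 R).domRestrict ρ), hρC.domRestrict.Icc_extend',
      fun t ht => by rw [IccExtend_of_mem _ _ ht]; rfl⟩
  set P : ℝ → ℝ := fun t => ∫ x in (0 : ℝ)..t, ρ₁ x with hPdef
  have hPd : ∀ t, HasDerivAt P (ρ₁ t) t := fun t =>
    (hρ₁C.integral_hasStrictDerivAt 0 t).hasDerivAt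
  have hP0 : ∀ t ∈ Icc 0 R, 0 ≤ P t := fun t ht =>
    intervalIntegral.integral_nonneg ht.1 fun x hx => by
      have hx' : x ∈ Icc 0 R := ⟨hx.1, hx.2.trans ht.2⟩
      rw [hρ₁ x hx']
      exact hρ x hx'
  have hPr : P r = ∫ t in (0 : ℝ)..r, ρ t :=
    intervalIntegral.integral_congr fun x hx => by
      rw [uIcc_of_le (hq0.le.trans hr1)] at hx
      exact hρ₁ x ⟨hx.1, hx.2.trans hr2⟩
  set W := comparisonFun ((n : ℝ) - 1) (√H) m f f' P with hWdef
  have hsin : ∀ t ∈ Icc 0 R, 0 ≤ sin (√H * t) := fun t ht => by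
    have h1 : 0 ≤ √H * t := mul_nonneg ha.le ht.1
    have h2 : √H * t ≤ √H * R := mul_le_mul_of_nonneg_left ht.2 ha.le
    exact sin_nonneg_of_nonneg_of_le_pi h1 (by linarith [pi_pos])
  have hcos : ∀ t ∈ Icc 0 R, 0 ≤ cos (√H * t) := fun t ht => by
    have h1 : 0 ≤ √H * t := mul_nonneg ha.le ht.1
    have h2 : √H * t ≤ √H * R := mul_le_mul_of_nonneg_left ht.2 ha.le
    exact cos_nonneg_of_neg_pi_div_two_le_of_le (by linarith [pi_pos]) (by linarith)
  have hWd : ∀ t ∈ Ioo 0 R, ∃ D, HasDerivAt W D t ∧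
      D ≤ 2 * √H ^ 2 * (cos (√H * t) ^ 2 - sin (√H * t) ^ 2) * f t := fun t ht => by
    have ht' := Ioo_subset_Icc_self ht
    have hnhds : Icc 0 R ∈ nhds t := Icc_mem_nhds ht.1 ht.2
    refine comparison_deriv hN ha (hm t ht) ((hf t ht').hasDerivAt hnhds)
      ((hf' t ht').hasDerivAt hnhds) (hPd t) (hP0 t ht') (hsin t ht') (hcos t ht') ?_
    rw [hHa, hρ₁ t ht']
    exact hRic t ht
  have hfC : ContinuousOn f (Icc 0 R) := fun t ht => (hf t ht).continuousWithinAt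
  have hf'C : ContinuousOn f' (Icc 0 R) := fun t ht => (hf' t ht).continuousWithinAt
  have hPC : Continuous P := continuous_iff_continuousAt.2 fun t => (hPd t).continuousAt
  have hscC : Continuous fun t => sin (√H * t) * cos (√H * t) := by fun_prop
  have hWC : ContinuousOn W (Ioc 0 R) := by
    have h1 := hfC.mono Ioc_subset_Icc_self
    have h2 := hf'C.mono Ioc_subset_Icc_self
    have h3 := hPC.continuousOn (s := Ioc 0 R)
    have h4 : Continuous fun t => sin (√H * t) := by fun_prop
    have h5 : Continuous fun t => cos (√H * t) := by fun_prop
    have h4 := h4.continuousOn (s := Ioc 0 R)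
    have h5 := h5.continuousOn (s := Ioc 0 R)
    exact (((h4.pow 2).mul ((hmC.sub h2).sub h3)).sub (continuousOn_const.mul (h4.mul h5))).add
      ((continuousOn_const.mul (h4.mul h5)).mul h1)
  -- If `cos (2 a t) f t ≤ c cos (2 a t)`, then `W - c a sin (2 a t)` is nonincreasing. The constant
  -- is `c = k` where `cos (2 a t) ≥ 0` and `c = -k` where `cos (2 a t) ≤ 0`.
  have hanti : ∀ (c : ℝ) (S : Set ℝ), Convex ℝ S → S ⊆ Ioc 0 R →
      (∀ t ∈ interior S, (cos (√H * t) ^ 2 - sin (√H * t) ^ 2) * f t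
        ≤ (cos (√H * t) ^ 2 - sin (√H * t) ^ 2) * c) →
      AntitoneOn (fun t => W t - 2 * c * √H * (sin (√H * t) * cos (√H * t))) S := by
    intro c S hS hSR hle
    have hint : ∀ t ∈ interior S, t ∈ Ioo 0 R := fun t ht => by
      have := interior_mono hSR ht
      rwa [interior_Ioc] at this
    have hd : ∀ t ∈ interior S, ∃ D ≤ 0, HasDerivAt
        (fun t => W t - 2 * c * √H * (sin (√H * t) * cos (√H * t))) D t := fun t ht => by
      obtain ⟨D, hD, hDle⟩ := hWd t (hint t ht)
      refine ⟨_, ?_, hD.sub ((hasDerivAt_sin_mul_cos (√H) t).const_mul (2 * c * √H))⟩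
      have := mul_le_mul_of_nonneg_left (hle t ht) (by positivity : 0 ≤ 2 * √H ^ 2)
      linarith
    refine antitoneOn_of_deriv_nonpos hS
      ((hWC.mono hSR).sub (continuous_const.mul hscC).continuousOn) ?_ ?_
    · intro t ht
      obtain ⟨D, -, hD⟩ := hd t ht
      exact hD.differentiableAt.differentiableWithinAt
    · intro t ht
      obtain ⟨D, hD0, hD⟩ := hd t ht
      rw [hD.deriv]
      exact hD0
  have hA1 := hanti k (Ioc 0 q) (convex_Ioc 0 q) (Ioc_subset_Ioc_right hqR) (by
    rw [interior_Ioc]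
    intro t ht
    refine mul_le_mul_of_nonneg_left
      (abs_le.1 (hfk t ⟨ht.1.le, ht.2.le.trans hqR⟩)).2 ?_
    rw [← cos_two_mul']
    have h1 : 0 < √H * t := mul_pos ha ht.1
    have h2 : √H * t < √H * q := mul_lt_mul_of_pos_left ht.2 ha
    exact cos_nonneg_of_neg_pi_div_two_le_of_le (by linarith [pi_pos]) (by linarith))
  have hA2 := hanti (-k) (Icc q R) (convex_Icc q R)
    (fun t ht => ⟨hq0.trans_le ht.1, ht.2⟩) (by
    rw [interior_Icc]
    intro t ht
    refine mul_le_mul_of_nonpos_left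
      (abs_le.1 (hfk t ⟨(hq0.trans ht.1).le, ht.2.le⟩)).1 ?_
    rw [← cos_two_mul']
    have h1 : √H * q < √H * t := mul_lt_mul_of_pos_left ht.1 ha
    have h2 : √H * t < √H * R := mul_lt_mul_of_pos_left ht.2 ha
    exact cos_nonpos_of_pi_div_two_le_of_le (by linarith) (by linarith [pi_pos]))
  have hlim : Tendsto W (nhdsWithin 0 (Ioi 0)) (nhds 0) := by
    have h0 : (0 : ℝ) ∈ Icc 0 R := ⟨le_rfl, hRpos.le⟩
    have hle : nhdsWithin (0 : ℝ) (Ioi 0) ≤ nhdsWithin 0 (Icc 0 R) := by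
      rw [← nhdsWithin_Ioc_eq_nhdsGT hRpos]
      exact nhdsWithin_mono _ Ioc_subset_Icc_self
    refine comparison_tendsto hH ((hfC 0 h0).mono_left hle) ((hf'C 0 h0).mono_left hle) ?_ hasymp
    have := (hPC.tendsto 0).mono_left (nhdsWithin_le_nhds (s := Ioi 0))
    simpa [hPdef] using this
  have hsq : 2 * (sin (√H * q) * cos (√H * q)) = 1 := by
    rw [← mul_assoc, ← sin_two_mul, haq, show 2 * (π / 4) = π / 2 by ring, sin_pi_div_two]
  have hWq : W q ≤ k * √H := by
    have hl : Tendsto (fun t => W t - 2 * k * √H * (sin (√H * t) * cos (√H * t)))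
        (nhdsWithin 0 (Ioi 0)) (nhds 0) := by
      have h2 := (hscC.tendsto 0).mono_left (nhdsWithin_le_nhds (s := Ioi 0))
      simpa using hlim.sub (h2.const_mul (2 * k * √H))
    have hge := ge_of_tendsto hl (b := W q - 2 * k * √H * (sin (√H * q) * cos (√H * q))) (by
      filter_upwards [Ioc_mem_nhdsGT hq0] with t ht
      exact hA1 ht ⟨hq0, le_rfl⟩ ht.2)
    linear_combination hge + k * √H * hsq
  have hWr := hA2 ⟨le_rfl, hqR⟩ ⟨hr1, hr2⟩ hr1
  have hrI : r ∈ Icc 0 R := ⟨hq0.le.trans hr1, hr2⟩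
  have hspos : 0 < sin (√H * r) := by
    have h1 : 0 < √H * r := mul_pos ha (hq0.trans_le hr1)
    have h2 : √H * r ≤ √H * R := mul_le_mul_of_nonneg_left hr2 ha.le
    exact sin_pos_of_pos_of_lt_pi h1 (by linarith [pi_pos])
  have hfr := mul_le_mul_of_nonneg_left (abs_le.1 (hfk r hrI)).1
    (by have := hcos r hrI; positivity : 0 ≤ 2 * √H * (sin (√H * r) * cos (√H * r)))
  simp only [hWdef, comparisonFun, hPr] at hWr hWq
  generalize (∫ t in (0 : ℝ)..r, ρ t) = I at *
  have hfin : sin (√H * r) ^ 2 * (m r - f' r - I)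
      ≤ (n - 1) * √H * (sin (√H * r) * cos (√H * r)) + 2 * k * √H := by
    linear_combination hWr + hWq + hfr + k * √H * hsq
  have hdiv : m r - f' r - I
      ≤ ((n - 1) * √H * (sin (√H * r) * cos (√H * r)) + 2 * k * √H) / sin (√H * r) ^ 2 := by
    rw [le_div_iff₀ (by positivity)]
    linarith
  have heq : ((n - 1) * √H * (sin (√H * r) * cos (√H * r)) + 2 * k * √H) / sin (√H * r) ^ 2
      = (n - 1) * √H * (cos (√H * r) / sin (√H * r)) + 2 * k * √H / sin (√H * r) ^ 2 := by
    field_simp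
  linarith
end

section
/- Let n ≥ 2 be an integer, H ∈ ℝ, and 0 < r₀ ≤ r. Let m : [r₀,r] → ℝ be C¹, f : [r₀,r] → ℝ be C², and ρ : [r₀,r] → [0,∞) be continuous. Assume m'(t) ≤ −m(t)²/(n−1) − (n−1)H + f''(t) + ρ(t) for all t ∈ [r₀,r]. Then m(r) − f'(r) ≤ (m(r₀) − f'(r₀)) − (n−1)H(r−r₀) + ∫_{r₀}^{r} ρ(t) dt. (Analytic form of Theorem 2.1, the rough weighted mean curvature comparison.) -/
/-!
The weighted mean curvature `m - f'` has derivative `m' - f''`, which the Riccati inequality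
bounds above by `-(n - 1) H + ρ` once the nonpositive term `-m² / (n - 1)` is dropped.
Integrating this bound over `[r₀, r]` by the fundamental theorem of calculus gives the claim.
-/

open Real MeasureTheory Set Filter

/-- Analytic form of Theorem 2.1, the rough weighted mean curvature
comparison. -/
theorem stmt_3 (n : ℕ) (hn : 2 ≤ n) (H r₀ r : ℝ) (hr₀ : 0 < r₀) (hr : r₀ ≤ r)
    (m f ρ m' f' f'' : ℝ → ℝ)
    (hm : ∀ t ∈ Set.Icc r₀ r, HasDerivWithinAt m (m' t) (Set.Icc r₀ r) t)
    (hm'C : ContinuousOn m' (Set.Icc r₀ r))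
    (hf : ∀ t ∈ Set.Icc r₀ r, HasDerivWithinAt f (f' t) (Set.Icc r₀ r) t)
    (hf' : ∀ t ∈ Set.Icc r₀ r, HasDerivWithinAt f' (f'' t) (Set.Icc r₀ r) t)
    (hf''C : ContinuousOn f'' (Set.Icc r₀ r))
    (hρC : ContinuousOn ρ (Set.Icc r₀ r)) (hρ : ∀ t ∈ Set.Icc r₀ r, 0 ≤ ρ t)
    (hRic : ∀ t ∈ Set.Icc r₀ r,
      m' t ≤ -(m t) ^ 2 / (n - 1) - (n - 1) * H + f'' t + ρ t) :
    m r - f' r ≤ (m r₀ - f' r₀) - (n - 1) * H * (r - r₀) + ∫ t in r₀..r, ρ t := by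
  have hn1 : (0 : ℝ) ≤ (n : ℝ) - 1 := by
    have : (2 : ℝ) ≤ n := by exact_mod_cast hn
    linarith
  have hC : ContinuousOn (fun t => m' t - f'' t) (Set.Icc r₀ r) := hm'C.sub hf''C
  have hI : IntervalIntegrable (fun t => m' t - f'' t) volume r₀ r :=
    hC.intervalIntegrable_of_Icc hr
  have hρI : IntervalIntegrable ρ volume r₀ r := hρC.intervalIntegrable_of_Icc hr
  have hcI : IntervalIntegrable (fun _ : ℝ => -((n : ℝ) - 1) * H) volume r₀ r :=
    intervalIntegrable_const
  have hd : ∀ t ∈ Set.Icc r₀ r,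
      HasDerivWithinAt (fun t => m t - f' t) (m' t - f'' t) (Set.Icc r₀ r) t :=
    fun t ht => (hm t ht).fun_sub (hf' t ht)
  have hFTC : ∫ t in r₀..r, (m' t - f'' t) = (m r - f' r) - (m r₀ - f' r₀) :=
    intervalIntegral.integral_eq_sub_of_hasDerivAt_of_le hr
      (fun t ht => (hd t ht).continuousWithinAt)
      (fun t ht => (hd t (Set.Ioo_subset_Icc_self ht)).hasDerivAt
        (Icc_mem_nhds ht.1 ht.2)) hI
  -- The term `-m² / (n - 1)` is nonpositive and is discarded.
  have hmono : ∫ t in r₀..r, (m' t - f'' t) ≤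
      ∫ t in r₀..r, (-((n : ℝ) - 1) * H + ρ t) := by
    refine intervalIntegral.integral_mono_on hr hI (hcI.add hρI) fun t ht => ?_
    have h1 := hRic t ht
    have h2 : 0 ≤ (m t) ^ 2 / ((n : ℝ) - 1) := div_nonneg (sq_nonneg _) hn1
    rw [neg_div] at h1
    linarith
  rw [hFTC, intervalIntegral.integral_add hcI hρI, intervalIntegral.integral_const,
    smul_eq_mul] at hmono
  linarith
end

section
/- Let l ≥ 0, R₀ > 0, and let A, B : (0,R₀] → (0,∞) be continuous functions, integrable near 0, such that A(r)/B(r) ≤ e^{lr}·A(t)/B(t) for all 0 < t ≤ r ≤ R₀. Define V(r) = ∫₀ʳ A(t)dt and W(r) = ∫₀ʳ B(t)dt. Then for all 0 < r ≤ R ≤ R₀, V(R)/W(R) ≤ (V(r)/W(r))·exp( ∫_r^R (e^{lt} − 1)·(B(t)/W(t)) dt ). (Analytic core of the relative volume comparison, Theorem 1.2: there A = A_f is the weighted area of geodesic spheres, B = A_H^a the area in the weighted model, V = V_f the weighted volume of balls, and W = V_H^a the model volume.) -/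
/-!
Write `V`, `W` for the primitives of `A`, `B` vanishing at `0`. Integrating the area comparison
`A r * B t ≤ exp (l * r) * A t * B r` in `t` over `(0, r)` gives
`A r * W r ≤ exp (l * r) * V r * B r` (`mul_primitive_le`), that is,
`(log (V / W))' = A / V - B / W ≤ (exp (l * r) - 1) * B / W`. Integrating this over `[r, R]`, where
`A / V` and `B / W` have primitives `log V` and `log W` (`integral_div_primitive`), and
exponentiating yields the claim.
-/

open Real MeasureTheory Set Filter

lemma intervalIntegrable_zero_left {F : ℝ → ℝ} {R₀ x : ℝ}
    (hint : IntervalIntegrable F volume 0 R₀) (hx : 0 < x) (hxR : x ≤ R₀) :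
    IntervalIntegrable F volume 0 x := by
  apply hint.mono_set
  rw [uIcc_of_le hx.le, uIcc_of_le (hx.le.trans hxR)]
  exact Icc_subset_Icc_right hxR

lemma primitive_pos {F : ℝ → ℝ} {R₀ x : ℝ} (hF : ∀ t ∈ Ioc 0 R₀, 0 < F t)
    (hint : IntervalIntegrable F volume 0 R₀) (hx : 0 < x) (hxR : x ≤ R₀) :
    0 < ∫ t in (0:ℝ)..x, F t :=
  intervalIntegral.intervalIntegral_pos_of_pos_on (intervalIntegrable_zero_left hint hx hxR)
    (fun t ht => hF t ⟨ht.1, ht.2.le.trans hxR⟩) hx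

lemma continuousOn_primitive_Icc {F : ℝ → ℝ} {R₀ r R : ℝ}
    (hint : IntervalIntegrable F volume 0 R₀) (hr : 0 < r) (hrR : r ≤ R) (hR : R ≤ R₀) :
    ContinuousOn (fun x => ∫ t in (0:ℝ)..x, F t) (Icc r R) := by
  have h := intervalIntegral.continuousOn_primitive_interval' hint left_mem_uIcc
  rw [uIcc_of_le (hr.le.trans (hrR.trans hR))] at h
  exact h.mono (Icc_subset_Icc hr.le hR)

lemma continuousOn_div_primitive {F : ℝ → ℝ} {R₀ r R : ℝ}
    (hC : ContinuousOn F (Ioc 0 R₀)) (hF : ∀ t ∈ Ioc 0 R₀, 0 < F t)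
    (hint : IntervalIntegrable F volume 0 R₀) (hr : 0 < r) (hrR : r ≤ R) (hR : R ≤ R₀) :
    ContinuousOn (fun x => F x / ∫ t in (0:ℝ)..x, F t) (Icc r R) :=
  (hC.mono fun _ hx => ⟨hr.trans_le hx.1, hx.2.trans hR⟩).div
    (continuousOn_primitive_Icc hint hr hrR hR)
    fun _ hx => (primitive_pos hF hint (hr.trans_le hx.1) (hx.2.trans hR)).ne'

/-- Away from `0`, the logarithmic derivative `F / ∫₀ˣ F` integrates to the increment of
`log ∫₀ˣ F`. -/
lemma integral_div_primitive {F : ℝ → ℝ} {R₀ r R : ℝ}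
    (hC : ContinuousOn F (Ioc 0 R₀)) (hF : ∀ t ∈ Ioc 0 R₀, 0 < F t)
    (hint : IntervalIntegrable F volume 0 R₀) (hr : 0 < r) (hrR : r ≤ R) (hR : R ≤ R₀) :
    ∫ x in r..R, F x / ∫ t in (0:ℝ)..x, F t =
      log (∫ t in (0:ℝ)..R, F t) - log (∫ t in (0:ℝ)..r, F t) := by
  have hpos : ∀ x ∈ Icc r R, (∫ t in (0:ℝ)..x, F t) ≠ 0 := fun x hx =>
    (primitive_pos hF hint (hr.trans_le hx.1) (hx.2.trans hR)).ne'
  refine intervalIntegral.integral_eq_sub_of_hasDerivAt_of_le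
    (f := fun x => log (∫ t in (0:ℝ)..x, F t)) hrR
    ((continuousOn_primitive_Icc hint hr hrR hR).log hpos) (fun x hx => ?_)
    ((continuousOn_div_primitive hC hF hint hr hrR hR).intervalIntegrable_of_Icc hrR)
  have hx0 : 0 < x := hr.trans hx.1
  have hxR : x < R₀ := hx.2.trans_le hR
  have hcont : ContinuousOn F (Ioo 0 R₀) := hC.mono Ioo_subset_Ioc_self
  exact (intervalIntegral.integral_hasDerivAt_right
    (intervalIntegrable_zero_left hint hx0 hxR.le)
    (hcont.stronglyMeasurableAtFilter isOpen_Ioo x ⟨hx0, hxR⟩)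
    (hcont.continuousAt (isOpen_Ioo.mem_nhds ⟨hx0, hxR⟩))).log
    (hpos x (Ioo_subset_Icc_self hx))

/-- The area comparison integrated over the smaller radius. -/
lemma mul_primitive_le {l R₀ x : ℝ} {A B : ℝ → ℝ} (hB : ∀ t ∈ Ioc 0 R₀, 0 < B t)
    (hAint : IntervalIntegrable A volume 0 R₀) (hBint : IntervalIntegrable B volume 0 R₀)
    (harea : ∀ t r, 0 < t → t ≤ r → r ≤ R₀ → A r / B r ≤ exp (l * r) * (A t / B t))
    (hx : 0 < x) (hxR : x ≤ R₀) :
    A x * (∫ t in (0:ℝ)..x, B t) ≤ exp (l * x) * B x * ∫ t in (0:ℝ)..x, A t := by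
  rw [← intervalIntegral.integral_const_mul, ← intervalIntegral.integral_const_mul]
  refine intervalIntegral.integral_mono_on_of_le_Ioo hx.le
    ((intervalIntegrable_zero_left hBint hx hxR).const_mul _)
    ((intervalIntegrable_zero_left hAint hx hxR).const_mul _) fun t ht => ?_
  have h := harea t x ht.1 ht.2.le hxR
  have hBx := hB x ⟨hx, hxR⟩
  have hBt := hB t ⟨ht.1, ht.2.le.trans hxR⟩
  rw [← mul_div_assoc, div_le_div_iff₀ hBx hBt] at h
  linarith

/-- Analytic core of the relative volume comparison, Theorem 1.2. -/
theorem stmt_8 (l R₀ : ℝ) (hl : 0 ≤ l) (hR₀ : 0 < R₀)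
    (A B : ℝ → ℝ)
    (hAC : ContinuousOn A (Set.Ioc 0 R₀)) (hBC : ContinuousOn B (Set.Ioc 0 R₀))
    (hA : ∀ t ∈ Set.Ioc 0 R₀, 0 < A t) (hB : ∀ t ∈ Set.Ioc 0 R₀, 0 < B t)
    (hAint : IntervalIntegrable A MeasureTheory.volume 0 R₀)
    (hBint : IntervalIntegrable B MeasureTheory.volume 0 R₀)
    (harea : ∀ t r, 0 < t → t ≤ r → r ≤ R₀ →
      A r / B r ≤ Real.exp (l * r) * (A t / B t)) :
    ∀ r R, 0 < r → r ≤ R → R ≤ R₀ →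
      (∫ t in (0:ℝ)..R, A t) / (∫ t in (0:ℝ)..R, B t)
        ≤ ((∫ t in (0:ℝ)..r, A t) / (∫ t in (0:ℝ)..r, B t)) *
          Real.exp (∫ t in r..R,
            (Real.exp (l * t) - 1) * (B t / ∫ s in (0:ℝ)..t, B s)) := by
  intro r R hr hrR hR
  have hVR := primitive_pos hA hAint (hr.trans_le hrR) hR
  have hWR := primitive_pos hB hBint (hr.trans_le hrR) hR
  have hVr := primitive_pos hA hAint hr (hrR.trans hR)
  have hWr := primitive_pos hB hBint hr (hrR.trans hR)
  have hcA := continuousOn_div_primitive hAC hA hAint hr hrR hR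
  have hcB := continuousOn_div_primitive hBC hB hBint hr hrR hR
  have hexp : ContinuousOn (fun t : ℝ => exp (l * t) - 1) (Icc r R) := by fun_prop
  have hle : (∫ x in r..R, (A x / (∫ t in (0:ℝ)..x, A t) - B x / ∫ t in (0:ℝ)..x, B t)) ≤
      ∫ t in r..R, (exp (l * t) - 1) * (B t / ∫ s in (0:ℝ)..t, B s) := by
    refine intervalIntegral.integral_mono_on hrR
      ((hcA.sub hcB).intervalIntegrable_of_Icc hrR)
      ((hexp.mul hcB).intervalIntegrable_of_Icc hrR) fun x hx => ?_
    have hx0 : 0 < x := hr.trans_le hx.1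
    have hxR : x ≤ R₀ := hx.2.trans hR
    have hV := primitive_pos hA hAint hx0 hxR
    have hW := primitive_pos hB hBint hx0 hxR
    have h := mul_primitive_le hB hAint hBint harea hx0 hxR
    have hdiv : A x / (∫ t in (0:ℝ)..x, A t) ≤
        exp (l * x) * (B x / ∫ t in (0:ℝ)..x, B t) := by
      rw [← mul_div_assoc, div_le_div_iff₀ hV hW]
      exact h
    linarith
  rw [intervalIntegral.integral_sub (hcA.intervalIntegrable_of_Icc hrR)
    (hcB.intervalIntegrable_of_Icc hrR), integral_div_primitive hAC hA hAint hr hrR hR,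
    integral_div_primitive hBC hB hBint hr hrR hR] at hle
  rw [← log_le_log_iff (div_pos hVR hWR) (mul_pos (div_pos hVr hWr) (exp_pos _)),
    log_mul (div_pos hVr hWr).ne' (exp_pos _).ne', log_exp, log_div hVR.ne' hWR.ne',
    log_div hVr.ne' hWr.ne']
  linarith
end

section
/- Let α > 0, k ≥ 0, and let f : [0,∞) → ℝ be continuous with |f(t)| ≤ k for all t ≥ 0. Then for all 0 < r₁ ≤ r₂, −2α·∫_{r₁}^{r₂} f(r)·coth(αr) dr + 2α²·∫_{r₁}^{r₂} (1/sinh²(αr))·( ∫₀ʳ f(t)·cosh(2αt) dt ) dr ≤ 2k·( cosh(2αr₂) + 1 ). (Key inequality in the proof of the absolute volume comparison, Theorem 3.3, with α = √(−H) for H < 0; the left-hand side equals −∫_{r₁}^{r₂} f(r)·(s_H²)'(r)/s_H²(r) dr + ∫_{r₁}^{r₂} (1/s_H²(r))·(∫₀ʳ f(t)·(s_H²)''(t)dt) dr where s_H(r) = sinh(αr)/α.) -/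
/-!
Write `F r = ∫₀ʳ f(t) cosh(2αt) dt`. Since `-α coth(αr)` is an antiderivative of `α² / sinh²(αr)` and
`coth x * (cosh(2x) - 1) = sinh(2x)`, integration by parts turns the left-hand side into
`2α ∫_{r₁}^{r₂} f(r) sinh(2αr) dr - 2α coth(αr₂) F(r₂) + 2α coth(αr₁) F(r₁)`.
From `|f| ≤ k` it follows that `|F r| ≤ k sinh(2αr) / (2α)`, and `coth x * sinh(2x) = cosh(2x) + 1`, so the
three terms are at most `k (cosh(2αr₂) - cosh(2αr₁))`, `k (cosh(2αr₂) + 1)` and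
`k (cosh(2αr₁) + 1)`, which add up to the claimed bound.

This is carried out in `key_of_continuous` for `f` continuous and bounded on all of `ℝ`; the general
case follows by extending `f` by the constant `f 0` to the left of `0`.
-/

open Real MeasureTheory Set Filter

lemma integral_sinh_mul (α a b : ℝ) :
    2 * α * ∫ t in a..b, Real.sinh (2 * α * t)
      = Real.cosh (2 * α * b) - Real.cosh (2 * α * a) := by
  rw [← intervalIntegral.integral_const_mul]
  refine intervalIntegral.integral_eq_sub_of_hasDerivAt
    (f := fun t => Real.cosh (2 * α * t)) (fun t _ => ?_)
    (Continuous.intervalIntegrable (by fun_prop) _ _)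
  have h := ((hasDerivAt_id t).const_mul (2 * α)).cosh
  simp only [id, mul_one] at h
  exact h.congr_deriv (by ring)

lemma integral_cosh_mul (α r : ℝ) :
    2 * α * ∫ t in (0:ℝ)..r, Real.cosh (2 * α * t) = Real.sinh (2 * α * r) := by
  rw [← intervalIntegral.integral_const_mul]
  have := intervalIntegral.integral_eq_sub_of_hasDerivAt (a := 0) (b := r)
    (f := fun t => Real.sinh (2 * α * t)) (f' := fun t => 2 * α * Real.cosh (2 * α * t))
    (fun t _ => by
      have h := ((hasDerivAt_id t).const_mul (2 * α)).sinh
      simp only [id, mul_one] at h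
      exact h.congr_deriv (by ring))
    (Continuous.intervalIntegrable (by fun_prop) _ _)
  simpa using this

/-- The boundary terms of the integration by parts. -/
lemma abs_boundary_le (α k r : ℝ) (hα : 0 < α) (f : ℝ → ℝ) (hf : Continuous f)
    (hfk : ∀ t, |f t| ≤ k) (hr : 0 < r) :
    |2 * α * (Real.cosh (α * r) / Real.sinh (α * r)) *
        ∫ t in (0:ℝ)..r, f t * Real.cosh (2 * α * t)| ≤ k * (Real.cosh (2 * α * r) + 1) := by
  have hs : 0 < Real.sinh (α * r) := Real.sinh_pos_iff.2 (mul_pos hα hr)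
  have hc : 0 < Real.cosh (α * r) := Real.cosh_pos _
  have hF : |∫ t in (0:ℝ)..r, f t * Real.cosh (2 * α * t)|
      ≤ k * ∫ t in (0:ℝ)..r, Real.cosh (2 * α * t) := by
    rw [← intervalIntegral.integral_const_mul]
    refine (intervalIntegral.abs_integral_le_integral_abs hr.le).trans ?_
    refine intervalIntegral.integral_mono_on hr.le
      (Continuous.intervalIntegrable (by fun_prop) _ _)
      (Continuous.intervalIntegrable (by fun_prop) _ _) (fun t _ => ?_)
    rw [abs_mul, abs_of_pos (Real.cosh_pos _)]
    exact mul_le_mul_of_nonneg_right (hfk t) (Real.cosh_pos _).le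
  have hI := integral_cosh_mul α r
  have h2s : Real.sinh (2 * α * r) = 2 * Real.sinh (α * r) * Real.cosh (α * r) := by
    rw [mul_assoc, Real.sinh_two_mul]
  have h2c : Real.cosh (2 * α * r) + 1 = 2 * Real.cosh (α * r) ^ 2 := by
    rw [mul_assoc, Real.cosh_two_mul, Real.sinh_sq]; ring
  have hq : 0 < 2 * α * (Real.cosh (α * r) / Real.sinh (α * r)) := by positivity
  rw [abs_mul, abs_of_pos hq]
  refine (mul_le_mul_of_nonneg_left hF hq.le).trans (le_of_eq ?_)
  calc _ = k * (Real.cosh (α * r) / Real.sinh (α * r)) *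
        (2 * α * ∫ t in (0:ℝ)..r, Real.cosh (2 * α * t)) := by ring
    _ = _ := by rw [hI, h2s, h2c]; field_simp

lemma hasDerivAt_coth (α r : ℝ) (hs : Real.sinh (α * r) ≠ 0) :
    HasDerivAt (fun r => Real.cosh (α * r) / Real.sinh (α * r))
      (-α / Real.sinh (α * r) ^ 2) r := by
  have h1 := ((hasDerivAt_id r).const_mul α).cosh
  have h2 := ((hasDerivAt_id r).const_mul α).sinh
  simp only [id, mul_one] at h1 h2
  refine (h1.div h2 hs).congr_deriv ?_
  congr 1
  linear_combination (-α) * Real.cosh_sq (α * r)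

lemma key_of_continuous (α k : ℝ) (hα : 0 < α) (f : ℝ → ℝ) (hf : Continuous f)
    (hfk : ∀ t, |f t| ≤ k) (r₁ r₂ : ℝ) (h₁ : 0 < r₁) (h₁₂ : r₁ ≤ r₂) :
    -2 * α * (∫ r in r₁..r₂, f r * (Real.cosh (α * r) / Real.sinh (α * r)))
        + 2 * α ^ 2 * (∫ r in r₁..r₂,
            (1 / (Real.sinh (α * r)) ^ 2) *
              ∫ t in (0:ℝ)..r, f t * Real.cosh (2 * α * t))
      ≤ 2 * k * (Real.cosh (2 * α * r₂) + 1) := by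
  have hs : ∀ r ∈ uIcc r₁ r₂, Real.sinh (α * r) ≠ 0 := fun r hr => by
    rw [uIcc_of_le h₁₂] at hr
    exact (Real.sinh_pos_iff.2 (mul_pos hα (h₁.trans_le hr.1))).ne'
  have hFd : ∀ r, HasDerivAt (fun r => ∫ t in (0:ℝ)..r, f t * Real.cosh (2 * α * t))
      (f r * Real.cosh (2 * α * r)) r := fun r =>
    (show Continuous fun t => f t * Real.cosh (2 * α * t) by fun_prop).integral_hasStrictDerivAt
      0 r |>.hasDerivAt
  have hFc : Continuous (fun r => ∫ t in (0:ℝ)..r, f t * Real.cosh (2 * α * t)) :=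
    continuous_iff_continuousAt.2 fun r => (hFd r).continuousAt
  have hcoth := abs_boundary_le α k r₁ hα f hf hfk h₁
  have hcoth₂ := abs_boundary_le α k r₂ hα f hf hfk (h₁.trans_le h₁₂)
  set F : ℝ → ℝ := fun r => ∫ t in (0:ℝ)..r, f t * Real.cosh (2 * α * t) with hF
  have hi1 : IntervalIntegrable
      (fun r => f r * (Real.cosh (α * r) / Real.sinh (α * r))) volume r₁ r₂ :=
    ContinuousOn.intervalIntegrable (hf.continuousOn.mul
      (ContinuousOn.div (by fun_prop) (by fun_prop) hs))
  have hi2 : IntervalIntegrable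
      (fun r => (1 / (Real.sinh (α * r)) ^ 2) * F r) volume r₁ r₂ :=
    ContinuousOn.intervalIntegrable ((ContinuousOn.div (by fun_prop) (by fun_prop)
      (fun r hr => pow_ne_zero 2 (hs r hr))).mul hFc.continuousOn)
  have hi3 : IntervalIntegrable (fun r => f r * Real.sinh (2 * α * r)) volume r₁ r₂ :=
    Continuous.intervalIntegrable (by fun_prop) _ _
  -- Integration by parts: the combined integrand is the derivative of `-2α coth(αr) F(r)`.
  have hparts : (-2 * α * (∫ r in r₁..r₂, f r * (Real.cosh (α * r) / Real.sinh (α * r)))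
        + 2 * α ^ 2 * (∫ r in r₁..r₂, (1 / (Real.sinh (α * r)) ^ 2) * F r))
        - 2 * α * ∫ r in r₁..r₂, f r * Real.sinh (2 * α * r)
      = -(2 * α * (Real.cosh (α * r₂) / Real.sinh (α * r₂)) * F r₂)
        - -(2 * α * (Real.cosh (α * r₁) / Real.sinh (α * r₁)) * F r₁) := by
    rw [← intervalIntegral.integral_const_mul, ← intervalIntegral.integral_const_mul,
      ← intervalIntegral.integral_const_mul,
      ← intervalIntegral.integral_add (hi1.const_mul _) (hi2.const_mul _),
      ← intervalIntegral.integral_sub ((hi1.const_mul _).add (hi2.const_mul _))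
        (hi3.const_mul _)]
    refine intervalIntegral.integral_eq_sub_of_hasDerivAt
      (f := fun r => -(2 * α * (Real.cosh (α * r) / Real.sinh (α * r)) * F r))
      (fun r hr => ?_)
      (((hi1.const_mul _).add (hi2.const_mul _)).sub (hi3.const_mul _))
    have hsr := hs r hr
    refine ((((hasDerivAt_coth α r hsr).const_mul (2 * α)).mul (hFd r)).neg).congr_deriv ?_
    rw [mul_assoc 2 α r, Real.sinh_two_mul, Real.cosh_two_mul, Real.cosh_sq]
    field_simp
    ring
  have hmain : 2 * α * ∫ r in r₁..r₂, f r * Real.sinh (2 * α * r)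
      ≤ k * (Real.cosh (2 * α * r₂) - Real.cosh (2 * α * r₁)) := by
    rw [← integral_sinh_mul, mul_left_comm k, ← intervalIntegral.integral_const_mul k]
    refine mul_le_mul_of_nonneg_left ?_ (by positivity)
    refine intervalIntegral.integral_mono_on h₁₂ hi3
      (Continuous.intervalIntegrable (by fun_prop) _ _) (fun r hr => ?_)
    have : 0 ≤ r := h₁.le.trans hr.1
    exact mul_le_mul_of_nonneg_right ((le_abs_self _).trans (hfk r))
      (Real.sinh_nonneg_iff.2 (by positivity))
  have b1 := (abs_le.1 hcoth).2
  have b2 := (abs_le.1 hcoth₂).1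
  change _ * F r₁ ≤ _ at b1
  change _ ≤ _ * F r₂ at b2
  linarith

/-- Key inequality in the proof of the absolute volume comparison,
Theorem 3.3, with `α = √(-H)` for `H < 0`. -/
theorem stmt_10 (α k : ℝ) (hα : 0 < α) (hk : 0 ≤ k) (f : ℝ → ℝ)
    (hfC : ContinuousOn f (Set.Ici 0)) (hfk : ∀ t, 0 ≤ t → |f t| ≤ k) :
    ∀ r₁ r₂, 0 < r₁ → r₁ ≤ r₂ →
      -2 * α * (∫ r in r₁..r₂, f r * (Real.cosh (α * r) / Real.sinh (α * r)))
        + 2 * α ^ 2 * (∫ r in r₁..r₂,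
            (1 / (Real.sinh (α * r)) ^ 2) *
              ∫ t in (0:ℝ)..r, f t * Real.cosh (2 * α * t))
      ≤ 2 * k * (Real.cosh (2 * α * r₂) + 1) := by
  intro r₁ r₂ h₁ h₁₂
  have hg : Continuous fun t => f (max t 0) :=
    hfC.comp_continuous (by fun_prop) fun t => le_max_right t 0
  have key := key_of_continuous α k hα (fun t => f (max t 0)) hg
    (fun t => hfk _ (le_max_right t 0)) r₁ r₂ h₁ h₁₂
  have e1 : (∫ r in r₁..r₂, f (max r 0) * (Real.cosh (α * r) / Real.sinh (α * r)))
      = ∫ r in r₁..r₂, f r * (Real.cosh (α * r) / Real.sinh (α * r)) := by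
    refine intervalIntegral.integral_congr fun r hr => ?_
    rw [uIcc_of_le h₁₂] at hr
    simp only [max_eq_left (h₁.le.trans hr.1)]
  have e2 : (∫ r in r₁..r₂, (1 / (Real.sinh (α * r)) ^ 2) *
        ∫ t in (0:ℝ)..r, f (max t 0) * Real.cosh (2 * α * t))
      = ∫ r in r₁..r₂, (1 / (Real.sinh (α * r)) ^ 2) *
        ∫ t in (0:ℝ)..r, f t * Real.cosh (2 * α * t) := by
    refine intervalIntegral.integral_congr fun r hr => ?_
    rw [uIcc_of_le h₁₂] at hr
    refine congrArg _ (intervalIntegral.integral_congr fun t ht => ?_)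
    rw [uIcc_of_le (h₁.le.trans hr.1)] at ht
    simp only [max_eq_left ht.1]
  rwa [e1, e2] at key
end
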